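/- The multiplication on the reduced tensor module T̄(V) = ⊕_{n≥1} V^{⊗n} defined by (v_1...v_p)·(v_{p+1}...v_{p+q}) = Σ_{σ ∈ Sh(p,q−1)} ε(σ^{-1}) v_{σ^{-1}(1)} ... v_{σ^{-1}(p+q−1)} v_{p+q} satisfies the graded Zinbiel relation u·(v·w) = (u·v)·w + (−1)^{|u||v|}(v·u)·w. -/

import Mathlib

/-- The graded shuffle product on the tensor module over a graded vector space with
homogeneous basis `B` (degree function `d : B → ℕ`), realized on the free module on
words: the sum over shuffles of the two words with the Koszul signs. -/
noncomputable def shuffle (K : Type*) [Field K] {B : Type*} (d : B → ℕ) :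
    List B → List B → (List B →₀ K)
  | [], v => Finsupp.single v 1
  | a :: u, [] => Finsupp.single (a :: u) 1
  | a :: u, b :: v =>
      Finsupp.mapDomain (List.cons a) (shuffle K d u (b :: v)) +
        ((-1 : K) ^ (d b * (d a + (u.map d).sum))) •
          Finsupp.mapDomain (List.cons b) (shuffle K d (a :: u) v)
  termination_by u v => u.length + v.length
  decreasing_by all_goals simp

/-- The Zinbiel (half-shuffle) product of two basis words:
`u · (w ++ [b]) = (u ⧢ w) ⊗ b`, i.e. the sum over the `(p, q−1)`-shuffles keeping the
last letter of the second word last, with Koszul signs. -/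
noncomputable def zmulWord (K : Type*) [Field K] {B : Type*} (d : B → ℕ)
    (u v : List B) : (List B →₀ K) :=
  match v.getLast? with
  | none => 0
  | some b => Finsupp.mapDomain (fun l => l ++ [b]) (shuffle K d u v.dropLast)

/-- The bilinear extension of the Zinbiel product to the free module on words. -/
noncomputable def Zmul (K : Type*) [Field K] {B : Type*} (d : B → ℕ) :
    (List B →₀ K) →ₗ[K] (List B →₀ K) →ₗ[K] (List B →₀ K) :=
  Finsupp.lsum K fun u => LinearMap.toSpanSingleton K _
    (Finsupp.lsum K fun v => LinearMap.toSpanSingleton K _ (zmulWord K d u v))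

namespace ZinbielAux

variable {K B : Type*} [Field K] (d : B → ℕ)

noncomputable def C (K : Type*) [Field K] {B : Type*} (a : B) : (List B →₀ K) →ₗ[K] (List B →₀ K) :=
  Finsupp.lmapDomain K K (List.cons a)

noncomputable def R (K : Type*) [Field K] {B : Type*} (a : B) : (List B →₀ K) →ₗ[K] (List B →₀ K) :=
  Finsupp.lmapDomain K K (fun l => l ++ [a])

/-- word degree -/
def deg (u : List B) : ℕ := (u.map d).sum

theorem deg_cons (a : B) (u : List B) : deg d (a :: u) = d a + deg d u := by simp [deg]
theorem deg_nil : deg d ([] : List B) = 0 := by simp [deg]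
theorem deg_snoc (a : B) (u : List B) : deg d (u ++ [a]) = deg d u + d a := by simp [deg]

theorem C_single (a : B) (u : List B) (r : K) :
    C K a (Finsupp.single u r) = Finsupp.single (a :: u) r := by
  simp [C, Finsupp.lmapDomain_apply, Finsupp.mapDomain_single]

theorem R_single (a : B) (u : List B) (r : K) :
    R K a (Finsupp.single u r) = Finsupp.single (u ++ [a]) r := by
  simp [R, Finsupp.lmapDomain_apply, Finsupp.mapDomain_single]

theorem C_R (a b : B) (x : List B →₀ K) : C K a (R K b x) = R K b (C K a x) := by
  have : (C K a).comp (R K b) = (R K b).comp (C K a) := by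
    ext u : 2
    simp [C_single, R_single]
  exact LinearMap.congr_fun this x

noncomputable def T (K : Type*) [Field K] {B : Type*} (d : B → ℕ) (k : ℕ) :
    (List B →₀ K) →ₗ[K] (List B →₀ K) :=
  Finsupp.lsum K fun u => LinearMap.toSpanSingleton K _
    (((-1 : K) ^ (k * deg d u)) • Finsupp.single u 1)

theorem T_single (k : ℕ) (u : List B) :
    T K d k (Finsupp.single u 1) = ((-1 : K) ^ (k * deg d u)) • Finsupp.single u 1 := by
  simp [T]

noncomputable def S (K : Type*) [Field K] {B : Type*} (d : B → ℕ) :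
    (List B →₀ K) →ₗ[K] (List B →₀ K) →ₗ[K] (List B →₀ K) :=
  Finsupp.lsum K fun u => LinearMap.toSpanSingleton K _
    (Finsupp.lsum K fun v => LinearMap.toSpanSingleton K _ (shuffle K d u v))

theorem S_single (u v : List B) :
    S K d (Finsupp.single u 1) (Finsupp.single v 1) = shuffle K d u v := by
  simp [S]

theorem sh_nil_left (v : List B) : shuffle K d [] v = Finsupp.single v 1 := by
  rw [shuffle]

theorem sh_nil_right (v : List B) : shuffle K d v [] = Finsupp.single v 1 := by
  cases v <;> rw [shuffle]

theorem sh_cons (a b : B) (u v : List B) : shuffle K d (a :: u) (b :: v) =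
    C K a (shuffle K d u (b :: v)) +
      ((-1 : K) ^ (d b * (d a + deg d u))) • C K b (shuffle K d (a :: u) v) := by
  rw [shuffle]; rfl

theorem S_nil_left (x : List B →₀ K) : S K d (Finsupp.single [] 1) x = x := by
  have : S K d (Finsupp.single [] 1) = LinearMap.id := by
    ext u : 2
    simp [S_single, sh_nil_left]
  rw [this]; rfl

theorem S_nil_right (x : List B →₀ K) : S K d x (Finsupp.single [] 1) = x := by
  have : (S K d).flip (Finsupp.single [] 1) = LinearMap.id := by
    ext u : 2
    simp [S_single, sh_nil_right]
  exact LinearMap.congr_fun this x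

theorem S_cons (a b : B) (x y : List B →₀ K) : S K d (C K a x) (C K b y) =
    C K a (S K d x (C K b y)) + C K b (S K d (T K d (d b) (C K a x)) y) := by
  induction x using Finsupp.induction_linear with
  | zero => simp
  | add f g hf hg => simp only [map_add, LinearMap.add_apply, hf, hg]; abel
  | single u r =>
    induction y using Finsupp.induction_linear with
    | zero => simp
    | add f g hf hg => simp only [map_add, hf, hg]; abel
    | single v s =>
      have hu : Finsupp.single u r = r • Finsupp.single u (1:K) := by simp
      have hv : Finsupp.single v s = s • Finsupp.single v (1:K) := by simp
      rw [hu, hv]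
      simp only [map_smul, LinearMap.smul_apply, C_single, T_single, S_single, sh_cons, deg_cons,
        smul_add]

theorem T_C (k : ℕ) (a : B) (x : List B →₀ K) :
    T K d k (C K a x) = ((-1 : K) ^ (k * d a)) • C K a (T K d k x) := by
  have : (T K d k).comp (C K a) = ((-1 : K) ^ (k * d a)) • (C K a).comp (T K d k) := by
    ext u : 2
    simp only [LinearMap.comp_apply, LinearMap.smul_apply, Finsupp.lsingle_apply, C_single, T_single, map_smul, deg_cons, smul_smul, mul_add, pow_add]
  exact LinearMap.congr_fun this x

theorem T_sh (k : ℕ) (u v : List B) : T K d k (shuffle K d u v) =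
    ((-1 : K) ^ (k * (deg d u + deg d v))) • shuffle K d u v := by
  match u, v with
  | [], v => simp [sh_nil_left, T_single, deg_nil]
  | u, [] => simp [sh_nil_right, T_single, deg_nil]
  | a :: u, b :: v =>
    rw [sh_cons, map_add, map_smul, T_C, T_C, T_sh k u (b :: v), T_sh k (a :: u) v]
    simp only [map_smul, smul_smul, smul_add, deg_cons]
    congr 2 <;> ring
  termination_by u.length + v.length
  decreasing_by all_goals simp

theorem S_assoc (u v w : List B) : S K d (Finsupp.single u 1) (shuffle K d v w) =
    S K d (shuffle K d u v) (Finsupp.single w 1) := by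
  match u, v, w with
  | [], v, w => simp [S_nil_left, sh_nil_left, S_single]
  | u, [], w => simp [sh_nil_left, sh_nil_right, S_single]
  | u, v, [] => simp [S_nil_right, sh_nil_right, S_single]
  | a :: u, b :: v, c :: w =>
    have h1 := S_assoc u (b :: v) (c :: w)
    have h2 := S_assoc (a :: u) v (c :: w)
    have h3 := S_assoc (a :: u) (b :: v) w
    have e1 : S K d (Finsupp.single (a :: u) 1) (shuffle K d (b :: v) (c :: w)) =
        C K a (S K d (Finsupp.single u 1) (shuffle K d (b :: v) (c :: w))) +
        ((-1 : K) ^ (d b * deg d (a :: u))) •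
          C K b (S K d (Finsupp.single (a :: u) 1) (shuffle K d v (c :: w))) +
        ((-1 : K) ^ (d c * (deg d (a :: u) + deg d (b :: v)))) •
          C K c (S K d (Finsupp.single (a :: u) 1) (shuffle K d (b :: v) w)) := by
      rw [sh_cons d b c, ← C_single a u]
      simp only [map_add, map_smul, S_cons]
      simp only [C_single, T_single, map_smul, LinearMap.smul_apply, deg_cons, smul_add, smul_smul,
        mul_add, pow_add]
      module
    have e2 : S K d (shuffle K d (a :: u) (b :: v)) (Finsupp.single (c :: w) 1) =
        C K a (S K d (shuffle K d u (b :: v)) (Finsupp.single (c :: w) 1)) +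
        ((-1 : K) ^ (d b * deg d (a :: u))) •
          C K b (S K d (shuffle K d (a :: u) v) (Finsupp.single (c :: w) 1)) +
        ((-1 : K) ^ (d c * (deg d (a :: u) + deg d (b :: v)))) •
          C K c (S K d (shuffle K d (a :: u) (b :: v)) (Finsupp.single w 1)) := by
      have h := T_sh (K := K) d (d c) (a :: u) (b :: v)
      have h' := congrArg (fun z => C K c (S K d z (Finsupp.single w 1))) h
      simp only [map_smul, LinearMap.smul_apply] at h'
      rw [← h', sh_cons d a b, ← C_single c w]
      simp only [map_add, map_smul, S_cons, LinearMap.add_apply, LinearMap.smul_apply, deg_cons, smul_add]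
      abel
    rw [e1, e2, h1, h2, h3]
  termination_by u.length + v.length + w.length
  decreasing_by all_goals simp <;> omega

theorem sh_comm (u v : List B) : shuffle K d u v =
    ((-1 : K) ^ (deg d u * deg d v)) • shuffle K d v u := by
  match u, v with
  | [], v => simp [sh_nil_left, sh_nil_right, deg_nil]
  | u, [] => simp [sh_nil_left, sh_nil_right, deg_nil]
  | a :: u, b :: v =>
    rw [sh_cons, sh_cons, sh_comm u (b :: v), sh_comm (a :: u) v, add_comm]
    simp only [map_smul, smul_smul, smul_add, deg_cons]
    congr 2
    · ring
    · rw [← pow_add]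
      apply neg_one_pow_congr
      simp only [Nat.even_add, Nat.even_mul]
      tauto
  termination_by u.length + v.length
  decreasing_by all_goals simp

theorem sh_snoc (a b : B) (u v : List B) : shuffle K d (u ++ [a]) (v ++ [b]) =
    R K b (shuffle K d (u ++ [a]) v) +
      ((-1 : K) ^ (d a * (deg d v + d b))) • R K a (shuffle K d u (v ++ [b])) := by
  match u, v with
  | [], [] =>
    simp [sh_cons, sh_nil_left, sh_nil_right, C_single, R_single, deg_nil, mul_comm]
  | [], y :: v =>
    have h := sh_snoc a b [] v
    simp only [List.nil_append, List.cons_append] at h ⊢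
    rw [sh_cons, h, sh_cons]
    simp only [sh_nil_left, map_add, map_smul, C_R, C_single, R_single, deg_nil, deg_cons, smul_add,
      smul_smul, List.cons_append]
    ring_nf
    abel
  | x :: u, [] =>
    have h := sh_snoc a b u []
    simp only [List.nil_append, List.cons_append] at h ⊢
    rw [sh_cons, h, sh_cons]
    simp only [sh_nil_right, map_add, map_smul, C_R, C_single, R_single, deg_nil, deg_cons, smul_add,
      deg_snoc, smul_smul, List.cons_append]
    ring_nf
    abel
  | x :: u, y :: v =>
    have h1 := sh_snoc a b u (y :: v)
    have h2 := sh_snoc a b (x :: u) v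
    simp only [List.cons_append] at h1 h2 ⊢
    rw [sh_cons, h1, h2, sh_cons, sh_cons]
    simp only [map_add, map_smul, C_R, deg_cons, smul_add, deg_snoc, smul_smul]
    ring_nf
    abel
  termination_by u.length + v.length
  decreasing_by all_goals simp

theorem zw_snoc (u v : List B) (b : B) : zmulWord K d u (v ++ [b]) = R K b (shuffle K d u v) := by
  simp [zmulWord, R, Finsupp.lmapDomain_apply]

theorem Z_single (u v : List B) :
    Zmul K d (Finsupp.single u 1) (Finsupp.single v 1) = zmulWord K d u v := by
  simp [Zmul]

theorem Z_R (c : B) (x y : List B →₀ K) : Zmul K d x (R K c y) = R K c (S K d x y) := by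
  have : (Zmul K d).compl₂ (R K c) = (S K d).compr₂ (R K c) := by
    ext u v : 4
    simp [R_single, Z_single, zw_snoc, S_single]
  exact LinearMap.congr_fun₂ this x y

end ZinbielAux

/-- The half-shuffle multiplication on the reduced tensor module `T̄(V)` satisfies the
graded Zinbiel relation `u·(v·w) = (u·v)·w + (−1)^{|u||v|}(v·u)·w`. -/
theorem zinbiel_relation {K B : Type*} [Field K] (d : B → ℕ) (u v w : List B)
    (hu : u ≠ []) (hv : v ≠ []) (hw : w ≠ []) :
    Zmul K d (Finsupp.single u 1) (Zmul K d (Finsupp.single v 1) (Finsupp.single w 1)) =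
      Zmul K d (Zmul K d (Finsupp.single u 1) (Finsupp.single v 1)) (Finsupp.single w 1) +
        ((-1 : K) ^ ((u.map d).sum * (v.map d).sum)) •
          Zmul K d (Zmul K d (Finsupp.single v 1) (Finsupp.single u 1))
            (Finsupp.single w 1) := by
  obtain ⟨u, a, rfl⟩ := List.eq_nil_or_concat' u |>.resolve_left hu
  obtain ⟨v, b, rfl⟩ := List.eq_nil_or_concat' v |>.resolve_left hv
  obtain ⟨w, c, rfl⟩ := List.eq_nil_or_concat' w |>.resolve_left hw
  open ZinbielAux in
  have key : shuffle K d (u ++ [a]) (v ++ [b]) = zmulWord K d (u ++ [a]) (v ++ [b]) +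
      ((-1 : K) ^ (deg d (u ++ [a]) * deg d (v ++ [b]))) •
        zmulWord K d (v ++ [b]) (u ++ [a]) := by
    rw [sh_snoc, zw_snoc, zw_snoc, sh_comm d u (v ++ [b]), map_smul, smul_smul, deg_snoc, deg_snoc]
    congr 2
    ring
  open ZinbielAux in
  rw [Z_single d (v ++ [b]), Z_single d (u ++ [a]), Z_single d (v ++ [b]), zw_snoc d (v ++ [b]) w c,
    ← R_single c w, Z_R, Z_R, Z_R, S_assoc, key]
  simp only [map_add, map_smul, LinearMap.add_apply, LinearMap.smul_apply]
  rfl
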